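/- Let 0 < s < 1. For all z, w ∈ ℂ, the series ∑_{n=0}^∞ 𝔥_{n,s}(z) · conj(𝔥_{n,s}(w)) converges, with sum equal to ((1−s²)/(2πs)) · exp( −((1+s²)/(4s))·(z² + conj(w)²) + ((1−s²)/(2s))·z·conj(w) ). -/

import Mathlib

open Polynomial Real

/-- The physicists' Hermite polynomials: `H 0 = 1`, `H (n+1) = 2X * H n - (H n)'`. -/
noncomputable def physHermite : ℕ → Polynomial ℝ
  | 0 => 1
  | n + 1 => 2 * Polynomial.X * physHermite n - Polynomial.derivative (physHermite n)

/-- The normalization constant `b_n(s) = (π√s/(1−s)) (2(1+s)/(1−s))^n n!`. -/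
noncomputable def bn (s : ℝ) (n : ℕ) : ℝ :=
  Real.pi * Real.sqrt s / (1 - s) * (2 * (1 + s) / (1 - s)) ^ n * n.factorial

/-- `𝔥_{n,s}(z) = b_n(s)^{-1/2} e^{-z²/2} H_n(z)`. -/
noncomputable def hns (s : ℝ) (n : ℕ) (z : ℂ) : ℂ :=
  ((Real.sqrt (bn s n) : ℂ))⁻¹ * Complex.exp (-z ^ 2 / 2) *
    Polynomial.aeval z (physHermite n)

/-! Integration by parts shows that `2 ^ n / √π * ∫ (y + iu) ^ n exp (-u²) du` satisfies the
three-term recurrence of `H_n(y)`, hence equals it. Multiplying two such representations and summing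
the exponential series under the integral turns `∑ H_n(x) H_n(y) (t/2) ^ n / n!` into
`π⁻¹ ∬ exp (2t(x + iu)(y + iv) - u² - v²) du dv`. By AM-GM the integrand is dominated by a product
of one-variable Gaussians as soon as `|t| < 1`, and two one-dimensional Gaussian integrals evaluate
it: this is Mehler's formula. The reproducing kernel is the case `t = (1 - s) / (1 + s)`, for which
`t / 2` is the reciprocal of the ratio `2(1 + s) / (1 - s)` in `b_n(s)`. -/

section HermitePolynomials

lemma derivative_physHermite_succ (n : ℕ) :
    derivative (physHermite (n + 1)) = 2 * ((n : ℝ[X]) + 1) * physHermite n := by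
  induction n with
  | zero => simp [physHermite]
  | succ n ih =>
    rw [physHermite, derivative_sub, derivative_mul, ih]
    simp only [derivative_mul, derivative_ofNat, derivative_X, derivative_add, derivative_natCast,
      derivative_one, physHermite]
    push_cast
    ring

lemma physHermite_add_two (n : ℕ) :
    physHermite (n + 2) =
      2 * X * physHermite (n + 1) - 2 * ((n : ℝ[X]) + 1) * physHermite n := by
  rw [physHermite, derivative_physHermite_succ]

end HermitePolynomials

section ExponentialSeries

open MeasureTheory

variable {α : Type*} [MeasurableSpace α] {μ : Measure α} {f g : α → ℂ}

lemma integrable_pow_mul_of_integrable_exp_norm_mul (hf : AEStronglyMeasurable f μ)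
    (hg : AEStronglyMeasurable g μ) (h : Integrable (fun a => Real.exp ‖f a‖ * ‖g a‖) μ) (n : ℕ) :
    Integrable (fun a => f a ^ n * g a) μ := by
  refine (h.const_mul (n.factorial : ℝ)).mono' ((hf.pow n).mul hg) (.of_forall fun a => ?_)
  have hpow : ‖f a‖ ^ n ≤ n.factorial * Real.exp ‖f a‖ := by
    rw [← div_le_iff₀' (by positivity)]
    exact Real.pow_div_factorial_le_exp _ (norm_nonneg _) n
  rw [norm_mul, norm_pow, ← mul_assoc]
  gcongr

lemma integrable_cexp_mul_of_integrable_exp_norm_mul (hf : AEStronglyMeasurable f μ)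
    (hg : AEStronglyMeasurable g μ) (h : Integrable (fun a => Real.exp ‖f a‖ * ‖g a‖) μ) :
    Integrable (fun a => Complex.exp (f a) * g a) μ := by
  refine h.mono' ((Complex.continuous_exp.comp_aestronglyMeasurable hf).mul hg)
    (.of_forall fun a => ?_)
  rw [norm_mul]
  gcongr
  exact Complex.norm_exp_le_exp_norm _

lemma hasSum_integral_pow_mul_div_factorial (hf : AEStronglyMeasurable f μ)
    (hg : AEStronglyMeasurable g μ) (h : Integrable (fun a => Real.exp ‖f a‖ * ‖g a‖) μ) :
    HasSum (fun n : ℕ => (∫ a, f a ^ n * g a ∂μ) / n.factorial)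
      (∫ a, Complex.exp (f a) * g a ∂μ) := by
  have norm_series (a : α) : HasSum (fun n : ℕ => ‖f a‖ ^ n / n.factorial * ‖g a‖)
      (Real.exp ‖f a‖ * ‖g a‖) := by
    rw [Real.exp_eq_exp_ℝ]
    exact (NormedSpace.expSeries_div_hasSum_exp ‖f a‖).mul_right _
  have series (a : α) : HasSum (fun n : ℕ => f a ^ n * g a / n.factorial)
      (Complex.exp (f a) * g a) := by
    rw [Complex.exp_eq_exp_ℂ]
    simpa only [div_mul_eq_mul_div] using
      (NormedSpace.expSeries_div_hasSum_exp (f a)).mul_right (g a)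
  simp_rw [← integral_div]
  refine hasSum_integral_of_dominated_convergence
    (fun n a => ‖f a‖ ^ n / n.factorial * ‖g a‖)
    (fun n => by fun_prop)
    (fun n => .of_forall fun a => ?_) (.of_forall fun a => (norm_series a).summable) ?_
    (.of_forall series)
  · rw [norm_div, norm_mul, norm_pow, Complex.norm_natCast, div_mul_eq_mul_div]
  · simpa only [fun a => (norm_series a).tsum_eq] using h

end ExponentialSeries

section GaussianIntegrals

open MeasureTheory
open Complex (I)

lemma integrable_exp_mul_add_abs_sq_mul_exp_neg_sq {c : ℝ} (hc : c < 1) (a : ℝ) :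
    Integrable (fun u : ℝ => Real.exp (c * (a + |u|) ^ 2) * Real.exp (-u ^ 2)) := by
  have hc' : 0 < 1 - c := sub_pos.mpr hc
  refine ((integrable_exp_neg_mul_sq (half_pos hc')).const_mul
    (Real.exp (c * a ^ 2 + 2 * c ^ 2 * a ^ 2 / (1 - c)))).mono' (by fun_prop)
    (.of_forall fun u => ?_)
  have complete_square : c * (a + |u|) ^ 2 - u ^ 2 =
      c * a ^ 2 + 2 * c ^ 2 * a ^ 2 / (1 - c) - (1 - c) / 2 * u ^ 2 -
        (1 - c) / 2 * (|u| - 2 * c * a / (1 - c)) ^ 2 := by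
    rw [← sq_abs u]
    field_simp
    ring
  rw [← Real.exp_add, ← Real.exp_add, Real.norm_of_nonneg (Real.exp_pos _).le]
  refine Real.exp_le_exp.mpr ?_
  have : 0 ≤ (1 - c) / 2 * (|u| - 2 * c * a / (1 - c)) ^ 2 := by positivity
  linarith

lemma norm_add_I_mul_ofReal_le (x : ℂ) (u : ℝ) : ‖x + I * u‖ ≤ ‖x‖ + |u| := by
  simpa using norm_add_le x (I * u)

lemma norm_cexp_neg_ofReal_sq (u : ℝ) : ‖Complex.exp (-(u : ℂ) ^ 2)‖ = Real.exp (-u ^ 2) := by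
  rw [← Complex.norm_of_nonneg (Real.exp_pos (-u ^ 2)).le]
  push_cast
  rfl

lemma integrable_pow_mul_cexp_neg_sq (y : ℂ) (n : ℕ) :
    Integrable (fun u : ℝ => (y + I * u) ^ n * Complex.exp (-(u : ℂ) ^ 2)) := by
  refine integrable_pow_mul_of_integrable_exp_norm_mul (by fun_prop) (by fun_prop) ?_ n
  refine ((integrable_exp_mul_add_abs_sq_mul_exp_neg_sq one_half_lt_one ‖y‖).const_mul
    (Real.exp (1 / 2))).mono' (by fun_prop) (.of_forall fun u => ?_)
  have : ‖y + I * u‖ ≤ 1 / 2 + 1 / 2 * (‖y‖ + |u|) ^ 2 := by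
    linarith [norm_add_I_mul_ofReal_le y u, sq_nonneg (‖y‖ + |u| - 1)]
  rw [norm_cexp_neg_ofReal_sq, Real.norm_of_nonneg (by positivity), ← mul_assoc,
    ← Real.exp_add (1 / 2)]
  gcongr

lemma ofReal_mul_cpow {r : ℝ} (hr : 0 ≤ r) (x a : ℂ) : (r * x) ^ a = (r : ℂ) ^ a * x ^ a := by
  rcases eq_or_ne a 0 with rfl | ha
  · simp only [Complex.cpow_zero, mul_one]
  rcases hr.eq_or_lt' with rfl | hr
  · simp only [Complex.ofReal_zero, zero_mul, Complex.zero_cpow ha]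
  rcases eq_or_ne x 0 with rfl | hx
  · simp only [mul_zero, Complex.zero_cpow ha]
  have hr' : (r : ℂ) ≠ 0 := Complex.ofReal_ne_zero.mpr hr.ne'
  rw [Complex.cpow_def_of_ne_zero (mul_ne_zero hr' hx), Complex.cpow_def_of_ne_zero hr',
    Complex.cpow_def_of_ne_zero hx, Complex.log_ofReal_mul hr hx, Complex.ofReal_log hr.le,
    add_mul, Complex.exp_add]

lemma integral_cexp_quadratic_vertical {a : ℂ} (ha : a.re < 1) (c x : ℂ) :
    ∫ u : ℝ, Complex.exp (2 * c * (x + I * u) - a * (x + I * u) ^ 2) *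
        Complex.exp (-(u : ℂ) ^ 2) =
      √π * ((1 - a) ^ (1 / 2 : ℂ))⁻¹ *
        Complex.exp ((2 * c * x - a * x ^ 2 - c ^ 2) / (1 - a)) := by
  have hre : 0 < (1 - a).re := by simpa using ha
  have hne : 1 - a ≠ 0 := fun h => by simp [h] at hre
  have sqrt_eq : (π / (1 - a)) ^ (1 / 2 : ℂ) = √π * ((1 - a) ^ (1 / 2 : ℂ))⁻¹ := by
    have harg : (1 - a).arg ≠ π := Complex.slitPlane_arg_ne_pi (.inl hre)
    rw [div_eq_mul_inv, ofReal_mul_cpow pi_pos.le, Complex.inv_cpow _ _ harg, Real.sqrt_eq_rpow,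
      Complex.ofReal_cpow pi_pos.le]
    push_cast
    rfl
  have integrand_eq (u : ℝ) :
      Complex.exp (2 * c * (x + I * u) - a * (x + I * u) ^ 2) * Complex.exp (-(u : ℂ) ^ 2) =
        Complex.exp (-(1 - a) * u ^ 2 + 2 * I * (c - a * x) * u + (2 * c * x - a * x ^ 2)) := by
    rw [← Complex.exp_add]
    congr 1
    linear_combination (-a * u ^ 2) * Complex.I_sq
  simp_rw [integrand_eq]
  rw [integral_cexp_quadratic (by simpa using ha), neg_neg, sqrt_eq, mul_pow, mul_pow,
    Complex.I_sq]
  congr 2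
  field_simp
  ring

end GaussianIntegrals

section GaussianMoments

open MeasureTheory
open Complex (I)

/-- The `n`-th moment of the unnormalized Gaussian weight `exp (-u ^ 2)` on the vertical line
through `y`. Up to the factor `√π / 2 ^ n` it is the physicists' Hermite polynomial `H_n(y)`. -/
noncomputable def gaussianMoment (y : ℂ) (n : ℕ) : ℂ :=
  ∫ u : ℝ, (y + I * u) ^ n * Complex.exp (-(u : ℂ) ^ 2)

lemma gaussianMoment_zero (y : ℂ) : gaussianMoment y 0 = √π := by
  simpa [gaussianMoment] using integral_cexp_quadratic_vertical (a := 0) (by simp) 0 y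

lemma hasDerivAt_pow_mul_cexp_neg_sq (y : ℂ) (n : ℕ) (u : ℝ) :
    HasDerivAt (fun u : ℝ => (y + I * u) ^ n * Complex.exp (-(u : ℂ) ^ 2))
      (I * (n * ((y + I * u) ^ (n - 1) * Complex.exp (-(u : ℂ) ^ 2)) +
        2 * ((y + I * u) ^ (n + 1) * Complex.exp (-(u : ℂ) ^ 2)) -
        2 * y * ((y + I * u) ^ n * Complex.exp (-(u : ℂ) ^ 2)))) u := by
  have hu : HasDerivAt (fun u : ℝ => (u : ℂ)) 1 u := Complex.ofRealCLM.hasDerivAt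
  have hpow := ((hu.const_mul I).const_add y).pow n
  have hexp := (hu.pow 2).neg.cexp
  refine (hpow.mul hexp).congr_deriv ?_
  simp only [Pi.pow_apply, Pi.neg_apply]
  push_cast
  linear_combination
    (-2 * u * ((y + I * u) ^ n * Complex.exp (-(u : ℂ) ^ 2))) * Complex.I_sq

lemma gaussianMoment_succ (y : ℂ) (n : ℕ) :
    2 * gaussianMoment y (n + 1) = 2 * y * gaussianMoment y n - n * gaussianMoment y (n - 1) := by
  have hint := integrable_pow_mul_cexp_neg_sq y
  have hlower := (hint (n - 1)).const_mul (n : ℂ)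
  have hupper := (hint (n + 1)).const_mul 2
  have hmiddle := (hint n).const_mul (2 * y)
  have by_parts := integral_eq_zero_of_hasDerivAt_of_integrable
    (hasDerivAt_pow_mul_cexp_neg_sq y n) (((hlower.add hupper).sub hmiddle).const_mul I) (hint n)
  rw [integral_const_mul, mul_eq_zero_iff_left Complex.I_ne_zero,
    integral_sub (hlower.fun_add hupper) hmiddle, integral_add hlower hupper] at by_parts
  simp only [integral_const_mul] at by_parts
  simp only [gaussianMoment]
  linear_combination by_parts

lemma two_pow_mul_gaussianMoment (y : ℂ) (n : ℕ) :
    2 ^ n * gaussianMoment y n = √π * aeval y (physHermite n) := by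
  induction n using Nat.twoStepInduction with
  | zero => simp [gaussianMoment_zero, physHermite]
  | one =>
    have h := gaussianMoment_succ y 0
    simp only [gaussianMoment_zero] at h
    simp only [physHermite, derivative_one, sub_zero, mul_one, map_mul, map_ofNat, aeval_X,
      pow_one, Nat.cast_zero, zero_mul] at h ⊢
    linear_combination h
  | more n ih ih_succ =>
    have h := gaussianMoment_succ y (n + 1)
    simp only [physHermite_add_two, Nat.add_sub_cancel, map_sub, map_mul, map_add, aeval_X,
      map_ofNat, map_natCast, map_one] at h ⊢
    push_cast at h
    linear_combination 2 ^ (n + 1) * h + 2 * y * ih_succ - 2 * ((n : ℂ) + 1) * ih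

end GaussianMoments

section MehlerFormula

open MeasureTheory
open Complex (I)

lemma integrable_exp_norm_mehler_kernel {t : ℂ} (ht : ‖t‖ < 1) (x y : ℂ) :
    Integrable (fun p : ℝ × ℝ => Real.exp ‖2 * t * ((x + I * p.1) * (y + I * p.2))‖ *
      ‖Complex.exp (-(p.1 : ℂ) ^ 2) * Complex.exp (-(p.2 : ℂ) ^ 2)‖) := by
  have hprod := (integrable_exp_mul_add_abs_sq_mul_exp_neg_sq ht ‖x‖).mul_prod
    (integrable_exp_mul_add_abs_sq_mul_exp_neg_sq ht ‖y‖)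
  refine hprod.mono' (by fun_prop) (.of_forall fun p => ?_)
  have norm_le : ‖2 * t * ((x + I * p.1) * (y + I * p.2))‖ ≤
      ‖t‖ * (‖x‖ + |p.1|) ^ 2 + ‖t‖ * (‖y‖ + |p.2|) ^ 2 := calc
    _ = ‖t‖ * (2 * ‖x + I * p.1‖ * ‖y + I * p.2‖) := by
      simp only [norm_mul, Complex.norm_ofNat]
      ring
    _ ≤ ‖t‖ * (‖x + I * p.1‖ ^ 2 + ‖y + I * p.2‖ ^ 2) := by
      gcongr
      exact two_mul_le_add_sq _ _
    _ ≤ ‖t‖ * ((‖x‖ + |p.1|) ^ 2 + (‖y‖ + |p.2|) ^ 2) := by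
      gcongr <;> exact norm_add_I_mul_ofReal_le _ _
    _ = _ := mul_add _ _ _
  rw [Real.norm_of_nonneg (by positivity), norm_mul (Complex.exp _), norm_cexp_neg_ofReal_sq,
    norm_cexp_neg_ofReal_sq, mul_mul_mul_comm (Real.exp (‖t‖ * _)), ← Real.exp_add (‖t‖ * _)]
  gcongr

lemma integral_mehler_kernel {t : ℂ} (ht : ‖t‖ < 1) (x y : ℂ) :
    ∫ p : ℝ × ℝ, Complex.exp (2 * t * ((x + I * p.1) * (y + I * p.2))) *
        (Complex.exp (-(p.1 : ℂ) ^ 2) * Complex.exp (-(p.2 : ℂ) ^ 2)) =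
      π * (((1 - t ^ 2) ^ (1 / 2 : ℂ))⁻¹ *
        Complex.exp ((2 * t * x * y - t ^ 2 * (x ^ 2 + y ^ 2)) / (1 - t ^ 2))) := by
  have ht_sq : (t ^ 2).re < 1 := (Complex.re_le_norm _).trans_lt <| by
    rw [norm_pow]
    exact pow_lt_one₀ (norm_nonneg t) ht two_ne_zero
  have inner_integral (u : ℝ) :
      ∫ v : ℝ, Complex.exp (2 * t * ((x + I * u) * (y + I * v))) *
          (Complex.exp (-(u : ℂ) ^ 2) * Complex.exp (-(v : ℂ) ^ 2)) =
        √π * (Complex.exp (2 * (t * y) * (x + I * u) - t ^ 2 * (x + I * u) ^ 2) *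
          Complex.exp (-(u : ℂ) ^ 2)) := by
    have h := integral_cexp_quadratic_vertical (a := 0) (by simp) (t * (x + I * u)) y
    simp only [zero_mul, sub_zero, Complex.one_cpow, inv_one, mul_one, div_one] at h
    calc
      _ = (∫ v : ℝ, Complex.exp (2 * (t * (x + I * u)) * (y + I * v)) *
            Complex.exp (-(v : ℂ) ^ 2)) * Complex.exp (-(u : ℂ) ^ 2) := by
        rw [← integral_mul_const]
        congr 1 with v
        ring_nf
      _ = _ := by
        rw [h]
        ring_nf
  rw [Measure.volume_eq_prod, integral_prod _ (integrable_cexp_mul_of_integrable_exp_norm_mul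
    (by fun_prop) (by fun_prop) (integrable_exp_norm_mehler_kernel ht x y))]
  simp_rw [inner_integral]
  rw [integral_const_mul, integral_cexp_quadratic_vertical ht_sq, mul_assoc, ← mul_assoc (√π : ℂ),
    ← Complex.ofReal_mul, Real.mul_self_sqrt pi_pos.le]
  ring_nf

lemma integral_mehler_kernel_term (t x y : ℂ) (n : ℕ) :
    ∫ p : ℝ × ℝ, (2 * t * ((x + I * p.1) * (y + I * p.2))) ^ n *
        (Complex.exp (-(p.1 : ℂ) ^ 2) * Complex.exp (-(p.2 : ℂ) ^ 2)) =
      π * (aeval x (physHermite n) * aeval y (physHermite n) * (t / 2) ^ n) := calc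
  _ = (2 * t) ^ n * (gaussianMoment x n * gaussianMoment y n) := by
    rw [gaussianMoment, gaussianMoment, ← integral_prod_mul, ← integral_const_mul,
      ← Measure.volume_eq_prod]
    simp only [mul_pow]
    congr 1 with p
    ring
  _ = (2 ^ n * gaussianMoment x n) * (2 ^ n * gaussianMoment y n) * (t / 2) ^ n := by
    rw [mul_pow, div_pow]
    field_simp
  _ = (√π * √π) * (aeval x (physHermite n) * aeval y (physHermite n) * (t / 2) ^ n) := by
    rw [two_pow_mul_gaussianMoment, two_pow_mul_gaussianMoment]
    ring
  _ = _ := by rw [← Complex.ofReal_mul, Real.mul_self_sqrt pi_pos.le]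

theorem hasSum_mehler {t : ℂ} (ht : ‖t‖ < 1) (x y : ℂ) :
    HasSum (fun n : ℕ => aeval x (physHermite n) * aeval y (physHermite n) *
        ((t / 2) ^ n / n.factorial))
      (((1 - t ^ 2) ^ (1 / 2 : ℂ))⁻¹ *
        Complex.exp ((2 * t * x * y - t ^ 2 * (x ^ 2 + y ^ 2)) / (1 - t ^ 2))) := by
  have h := hasSum_integral_pow_mul_div_factorial (by fun_prop) (by fun_prop)
    (integrable_exp_norm_mehler_kernel ht x y)
  simp_rw [integral_mehler_kernel ht, integral_mehler_kernel_term, mul_div_assoc] at h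
  exact (hasSum_mul_left_iff (Complex.ofReal_ne_zero.mpr pi_ne_zero)).mp h

end MehlerFormula

section ReproducingKernel

lemma conj_hns (s : ℝ) (n : ℕ) (w : ℂ) :
    starRingEnd ℂ (hns s n w) = hns s n (starRingEnd ℂ w) := by
  simp only [hns, map_mul, map_inv₀, Complex.conj_ofReal, ← Complex.exp_conj, aeval_conj,
    map_div₀, map_neg, map_pow, map_ofNat]

lemma inv_bn (s : ℝ) (n : ℕ) :
    (bn s n)⁻¹ = (1 - s) / (π * √s) * (((1 - s) / (1 + s) / 2) ^ n / n.factorial) := by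
  rw [bn, mul_inv, mul_inv, inv_div, ← inv_pow, inv_div, mul_comm 2,
    ← div_div (1 - s) (1 + s), mul_assoc, ← div_eq_mul_inv]

lemma bn_pos {s : ℝ} (hs0 : 0 < s) (hs1 : s < 1) (n : ℕ) : 0 < bn s n := by
  have : 0 < 1 - s := sub_pos.mpr hs1
  have := pi_pos
  unfold bn
  positivity

lemma hns_mul_hns {s : ℝ} (hs0 : 0 < s) (hs1 : s < 1) (n : ℕ) (z y : ℂ) :
    hns s n z * hns s n y =
      (1 - s) / (π * √s) * Complex.exp (-(z ^ 2 + y ^ 2) / 2) *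
        (aeval z (physHermite n) * aeval y (physHermite n) *
          (((1 - s) / (1 + s) / 2) ^ n / n.factorial)) := by
  have normalization : ((√(bn s n) : ℂ))⁻¹ * ((√(bn s n) : ℂ))⁻¹ =
      (1 - s) / (π * √s) * (((1 - s) / (1 + s) / 2) ^ n / n.factorial) := by
    rw [← mul_inv, ← Complex.ofReal_mul, Real.mul_self_sqrt (bn_pos hs0 hs1 n).le,
      ← Complex.ofReal_inv, inv_bn]
    push_cast
    rfl
  have gaussian_factor : Complex.exp (-(z ^ 2 + y ^ 2) / 2) =
      Complex.exp (-z ^ 2 / 2) * Complex.exp (-y ^ 2 / 2) := by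
    rw [← Complex.exp_add]
    ring_nf
  rw [gaussian_factor, hns, hns]
  linear_combination (Complex.exp (-z ^ 2 / 2) * Complex.exp (-y ^ 2 / 2) *
    aeval z (physHermite n) * aeval y (physHermite n)) * normalization

lemma norm_one_sub_div_one_add_lt_one {s : ℂ} (hs : 0 < s.re) : ‖(1 - s) / (1 + s)‖ < 1 := by
  have norm_lt : ‖1 - s‖ < ‖1 + s‖ := by
    rw [← sq_lt_sq₀ (norm_nonneg _) (norm_nonneg _), Complex.sq_norm, Complex.sq_norm,
      Complex.normSq_sub, Complex.normSq_add]
    simp only [map_one, one_mul, Complex.conj_re]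
    linarith
  rw [norm_div]
  exact (div_lt_one ((norm_nonneg _).trans_lt norm_lt)).mpr norm_lt

lemma one_sub_div_one_add_sq {K : Type*} [Field K] {s : K} (hs : 1 + s ≠ 0) :
    1 - ((1 - s) / (1 + s)) ^ 2 = 4 * s / (1 + s) ^ 2 := by
  field_simp
  ring

lemma mehler_prefactor {s : ℝ} (hs : 0 < s) :
    (1 - s) / (π * √s) * ((1 - ((1 - s) / (1 + s)) ^ 2 : ℂ) ^ (1 / 2 : ℂ))⁻¹ =
      (((1 - s ^ 2) / (2 * π * s) : ℝ) : ℂ) := by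
  have hs' : 0 < 1 + s := by positivity
  have sq_eq : (1 - ((1 - s) / (1 + s)) ^ 2 : ℂ) = ((2 * √s / (1 + s) : ℝ) : ℂ) ^ 2 := by
    norm_cast
    rw [one_sub_div_one_add_sq hs'.ne', div_pow, mul_pow, Real.sq_sqrt hs.le]
    norm_num
  rw [sq_eq, one_div, Complex.sq_cpow_two_inv (by rw [Complex.ofReal_re]; positivity)]
  norm_cast
  field_simp
  rw [Real.sq_sqrt hs.le]
  ring

lemma mehler_exponent {s : ℂ} (hs : s ≠ 0) (hs' : 1 + s ≠ 0) (z y : ℂ) :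
    -(z ^ 2 + y ^ 2) / 2 +
        (2 * ((1 - s) / (1 + s)) * z * y - ((1 - s) / (1 + s)) ^ 2 * (z ^ 2 + y ^ 2)) /
          (1 - ((1 - s) / (1 + s)) ^ 2) =
      -((1 + s ^ 2) / (4 * s)) * (z ^ 2 + y ^ 2) + (1 - s ^ 2) / (2 * s) * (z * y) := by
  rw [one_sub_div_one_add_sq hs']
  field_simp
  ring

end ReproducingKernel

theorem hns_reproducing_kernel_sum (s : ℝ) (hs0 : 0 < s) (hs1 : s < 1) (z w : ℂ) :
    HasSum (fun n : ℕ => hns s n z * (starRingEnd ℂ) (hns s n w))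
      (((1 - s ^ 2) / (2 * Real.pi * s) : ℝ) *
        Complex.exp (-(((1 + s ^ 2) / (4 * s) : ℝ)) * (z ^ 2 + (starRingEnd ℂ) w ^ 2) +
          (((1 - s ^ 2) / (2 * s) : ℝ)) * (z * (starRingEnd ℂ) w))) := by
  have hs : (s : ℂ) ≠ 0 := Complex.ofReal_ne_zero.mpr hs0.ne'
  have hs' : 1 + (s : ℂ) ≠ 0 := by exact_mod_cast (add_pos one_pos hs0).ne'
  have ht : ‖(1 - s : ℂ) / (1 + s)‖ < 1 := norm_one_sub_div_one_add_lt_one hs0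
  have h := (hasSum_mehler ht z (starRingEnd ℂ w)).mul_left
    ((1 - s) / (π * √s) * Complex.exp (-(z ^ 2 + starRingEnd ℂ w ^ 2) / 2))
  rw [mul_mul_mul_comm, mehler_prefactor hs0, ← Complex.exp_add, mehler_exponent hs hs'] at h
  simp only [conj_hns, hns_mul_hns hs0 hs1]
  exact_mod_cast h
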